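/- Let g be a compactly driven system with the USP such that for every x ∈ X the map g(·,x) : U → X is injective. Then the causal mapping H : ←U → (X_U)^{ℤ<0}, H(←u) = (…, h(r←u), h(←u)) where E(←u) = {h(←u)}, is injective, and hence H is a homeomorphism of ←U onto its image H(←U); that is, H is a causal embedding. -/

import Mathlib

open Metric Set Filter Topology Function

universe u' v'

variable {U : Type u'} {X : Type v'}

/-- `proc g u j m x = φ_ū(m+j, m, x)`: apply `g_{u m}, g_{u (m+1)}, …, g_{u (m+j-1)}`
to `x`, in that order. -/
def proc (g : U → X → X) (u : ℤ → U) : ℕ → ℤ → X → X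
  | 0, _, x => x
  | j + 1, m, x => g (u (m + j)) (proc g u j m x)

/-- A solution of the driven system `g` for the input `u`. -/
def IsSolution (g : U → X → X) (u : ℤ → U) (x : ℤ → X) : Prop :=
  ∀ n : ℤ, x (n + 1) = g (u n) (x n)

/-- The unique solution property: every input has exactly one solution. -/
def USP (g : U → X → X) : Prop :=
  ∀ u : ℤ → U, ∃! x : ℤ → X, IsSolution g u x

/-- The set of reachable states at time `n`: `X_n(ū) = ⋂_{j ≥ 1} φ_ū(n, n - j, X)`. -/
def reach (g : U → X → X) (u : ℤ → U) (n : ℤ) : Set X :=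
  ⋂ j : ℕ, Set.range (proc g u (j + 1) (n - (j + 1)))

/-- The reachable set `X_U = ⋃ {X_n(ū) : n ∈ ℤ, ū ∈ U^ℤ}`. -/
def reachSet (g : U → X → X) : Set X :=
  ⋃ u : ℤ → U, ⋃ n : ℤ, reach g u n

/-- The left-infinite part `←u^n = (…, u_{n-2}, u_{n-1})` of an input `u`;
coordinate `k : ℕ` corresponds to time `n - 1 - k` (so `0` is the most recent one). -/
def leftOf (u : ℤ → U) (n : ℤ) : ℕ → U := fun k => u (n - 1 - (k : ℤ))

/-- The right-shift map `r : (…, u_{-2}, u_{-1}) ↦ (…, u_{-3}, u_{-2})`. -/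
def shift (w : ℕ → U) : ℕ → U := fun k => w (k + 1)

/-- The concatenation map `σ_v : (…, u_{-2}, u_{-1}) ↦ (…, u_{-2}, u_{-1}, v)`. -/
def append (v : U) (w : ℕ → U) : ℕ → U := fun k => Nat.casesOn k v w

/-- `encProc g w j = φ_ū(0, -j, ·)` for any input `ū` whose left-infinite part is `w`. -/
def encProc (g : U → X → X) : (ℕ → U) → ℕ → X → X
  | _, 0, x => x
  | w, j + 1, x => g (w 0) (encProc g (shift w) j x)

/-- The encoding map `E(←u) = X_0(ū) = ⋂_{j ≥ 1} φ_ū(0, -j, X)`. -/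
def enc (g : U → X → X) (w : ℕ → U) : Set X :=
  ⋂ j : ℕ, Set.range (encProc g w (j + 1))

/-- The map `g̃_v : (…, x_{-2}, x_{-1}) ↦ (…, x_{-2}, x_{-1}, g(v, x_{-1}))`. -/
def tildeg (g : U → X → X) (v : U) (x : ℕ → X) : ℕ → X :=
  fun k => Nat.casesOn k (g v (x 0)) x

/-- The Hausdorff semi-distance `dist(A, B) = sup_{a ∈ A} inf_{b ∈ B} d(a, b)`. -/
noncomputable def semiDist [MetricSpace X] (A B : Set X) : ℝ :=
  sSup ((fun a => Metric.infDist a B) '' A)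

/-!
Reachability passes from `shift w` to `w` by applying `g (w 0)`, so the states `h (shift^[k] w)`
form a left-infinite solution: entry `k` of `H w` is `g (w k)` of entry `k + 1`. Injectivity of
`g (·) x` then recovers every input `w k` from two consecutive states, so `H` is injective.

Continuity of `h` comes from compactness of the state space: the graph of `enc g` is an
intersection of projections of closed sets along `X`, hence closed, and a set-valued map into a
compact space with closed graph is upper hemicontinuous. A continuous injection from the compact
space of left-infinite inputs to a Hausdorff space is an embedding.
-/

section ClosedGraph

variable {A Y Z : Type*} [TopologicalSpace A] [TopologicalSpace Y] [TopologicalSpace Z]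

theorem upperHemicontinuous_of_isClosed_graph [CompactSpace Y] {F : A → Set Y}
    (hF : IsClosed {p : A × Y | p.2 ∈ F p.1}) : UpperHemicontinuous F := by
  rw [upperHemicontinuous_iff_isClosed_compl_preimage_Iic_compl]
  intro s hs
  have lowerInverse_eq : (F ⁻¹' Iic sᶜ)ᶜ =
      Prod.fst '' ({p : A × Y | p.2 ∈ F p.1} ∩ Prod.snd ⁻¹' s) := by
    ext a
    simp [Set.not_subset]
  rw [lowerInverse_eq]
  exact isClosedMap_fst_of_compactSpace _ (hF.inter (hs.preimage continuous_snd))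

theorem isClosed_setOf_mem_range [CompactSpace Z] [T2Space Y] {f : A → Z → Y}
    (hf : Continuous fun p : A × Z => f p.1 p.2) :
    IsClosed {p : A × Y | p.2 ∈ range (f p.1)} := by
  have graph_eq : {p : A × Y | p.2 ∈ range (f p.1)} =
      Prod.fst '' {q : (A × Y) × Z | f q.1.1 q.2 = q.1.2} := by
    ext p
    simp
  rw [graph_eq]
  exact isClosedMap_fst_of_compactSpace _ (isClosed_eq
    (hf.comp ((continuous_fst.comp continuous_fst).prodMk continuous_snd))
    (continuous_snd.comp continuous_fst))

end ClosedGraph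

theorem iterate_shift_apply (k j : ℕ) (w : ℕ → U) : shift^[k] w j = w (j + k) := by
  induction k generalizing j with
  | zero => rfl
  | succ k ih => rw [Function.iterate_succ_apply', shift, ih, Nat.add_right_comm, Nat.add_assoc]

/-- The causal mapping `←u ↦ (…, h (r ←u), h ←u)` induced by a map `h` on left-infinite inputs;
as in `leftOf`, coordinate `0` is the most recent one. -/
def causalMap (h : (ℕ → U) → X) (w : ℕ → U) : ℕ → X := fun k => h (shift^[k] w)

section Encoding

variable {g : U → X → X} {h : (ℕ → U) → X}

theorem mapsTo_enc_shift (g : U → X → X) (w : ℕ → U) :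
    MapsTo (g (w 0)) (enc g (shift w)) (enc g w) := by
  intro x hx
  refine mem_iInter.2 fun j => ?_
  cases j with
  | zero => exact ⟨x, rfl⟩
  | succ j =>
    obtain ⟨y, hy⟩ := mem_iInter.1 hx j
    exact ⟨y, congrArg (g (w 0)) hy⟩

theorem apply_shift_of_enc_eq_singleton (hh : ∀ w, enc g w = {h w}) (w : ℕ → U) :
    g (w 0) (h (shift w)) = h w := by
  simpa only [hh, mapsTo_singleton, mem_singleton_iff] using mapsTo_enc_shift g w

theorem apply_causalMap_succ (hstep : ∀ w, g (w 0) (h (shift w)) = h w) (w : ℕ → U) (k : ℕ) :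
    g (w k) (causalMap h w (k + 1)) = causalMap h w k := by
  simpa only [causalMap, iterate_shift_apply, Nat.zero_add, ← Function.iterate_succ_apply' shift]
    using hstep (shift^[k] w)

theorem causalMap_injective (hstep : ∀ w, g (w 0) (h (shift w)) = h w)
    (hinj : ∀ w, Injective fun v => g v (h w)) : Injective (causalMap h) := by
  intro w w' hw
  funext k
  apply hinj (shift^[k + 1] w)
  calc g (w k) (causalMap h w (k + 1))
      = causalMap h w k := apply_causalMap_succ hstep w k
    _ = causalMap h w' k := by rw [hw]
    _ = g (w' k) (causalMap h w' (k + 1)) := (apply_causalMap_succ hstep w' k).symm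
    _ = g (w' k) (causalMap h w (k + 1)) := by rw [hw]

end Encoding

section Continuity

variable [TopologicalSpace U] [TopologicalSpace X] {g : U → X → X} {h : (ℕ → U) → X}

theorem continuous_shift : Continuous (shift : (ℕ → U) → ℕ → U) :=
  continuous_pi fun k => continuous_apply (k + 1)

theorem continuous_causalMap (hh : Continuous h) : Continuous (causalMap h) :=
  continuous_pi fun k => hh.comp (continuous_shift.iterate k)

theorem continuous_encProc (hg : Continuous fun p : U × X => g p.1 p.2) (j : ℕ) :
    Continuous fun p : (ℕ → U) × X => encProc g p.1 j p.2 := by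
  induction j with
  | zero => exact continuous_snd
  | succ j ih =>
    have continuous_past : Continuous fun p : (ℕ → U) × X => encProc g (shift p.1) j p.2 :=
      ih.comp (continuous_shift.prodMap continuous_id)
    exact hg.comp (((continuous_apply 0).comp continuous_fst).prodMk continuous_past)

variable [CompactSpace X] [T2Space X]

theorem isClosed_setOf_mem_enc (hg : Continuous fun p : U × X => g p.1 p.2) :
    IsClosed {p : (ℕ → U) × X | p.2 ∈ enc g p.1} := by
  simp only [enc, mem_iInter, ofPred_forall]
  exact isClosed_iInter fun j =>
    isClosed_setOf_mem_range (f := fun w => encProc g w (j + 1)) (continuous_encProc hg (j + 1))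

theorem upperHemicontinuous_enc (hg : Continuous fun p : U × X => g p.1 p.2) :
    UpperHemicontinuous (enc g) :=
  upperHemicontinuous_of_isClosed_graph (isClosed_setOf_mem_enc hg)

theorem continuous_of_enc_eq_singleton (hg : Continuous fun p : U × X => g p.1 p.2)
    (hh : ∀ w, enc g w = {h w}) : Continuous h := by
  rw [← upperHemicontinuous_singleton_iff, ← funext hh]
  exact upperHemicontinuous_enc hg

end Continuity

theorem stmt_13_general [TopologicalSpace X] [CompactSpace X] [T2Space X]
    [TopologicalSpace U] [CompactSpace U] {g : U → X → X}
    (hg : Continuous fun p : U × X => g p.1 p.2) {h : (ℕ → U) → X}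
    (hh : ∀ w, enc g w = {h w}) (hinj : ∀ w, Injective fun v => g v (h w)) :
    IsClosedEmbedding (causalMap h) :=
  (continuous_causalMap (continuous_of_enc_eq_singleton hg hh)).isClosedEmbedding
    (causalMap_injective (apply_shift_of_enc_eq_singleton hh) hinj)

/-- under the USP, if `g(·, x)` is injective for every `x ∈ X`, then the
causal mapping `H(←u) = (…, h(r←u), h(←u))` is injective, and it is a homeomorphism
onto its image, i.e. a causal embedding. -/
theorem stmt_13 [MetricSpace X] [CompactSpace X] [MetricSpace U] [CompactSpace U]
    (g : U → X → X) (hg : Continuous fun p : U × X => g p.1 p.2)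
    (husp : USP g) (hinj : ∀ x : X, Function.Injective fun v : U => g v x)
    (h : (ℕ → U) → X) (hh : ∀ w : ℕ → U, enc g w = {h w})
    (H : (ℕ → U) → ℕ → X) (hH : ∀ (w : ℕ → U) (k : ℕ), H w k = h (shift^[k] w)) :
    Function.Injective H ∧ Topology.IsEmbedding H := by
  obtain rfl : H = causalMap h := funext₂ hH
  have hemb := (stmt_13_general hg hh fun w => hinj (h w)).isEmbedding
  exact ⟨hemb.injective, hemb⟩
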